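/- Let g ≥ 1 and let G be a finitely generated group admitting a surjective group homomorphism ρ : G → Sp(2g,ℤ) onto the integral symplectic group. Then G has uniformly exponential growth, i.e., ω(G) > 1. -/

import Mathlib

open Matrix
/-- The matrix of the standard symplectic form
`q(x,y) = x₁y₂ - x₂y₁ + ⋯ + x_{2g-1}y_{2g} - x_{2g}y_{2g-1}` on `ℤ^{2g}`. -/
def stdSymplecticJ (g : ℕ) : Matrix (Fin (2 * g)) (Fin (2 * g)) ℤ :=
  Matrix.of fun i j =>
    if (i : ℕ) % 2 = 0 ∧ (j : ℕ) = (i : ℕ) + 1 then 1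
    else if (j : ℕ) % 2 = 0 ∧ (i : ℕ) = (j : ℕ) + 1 then -1
    else 0

/-- `Sp(2g,ℤ)`: the group of `2g × 2g` integer matrices preserving the standard
non-degenerate skew-symmetric bilinear form on `ℤ^{2g}`. -/
def Sp (g : ℕ) : Subgroup (GL (Fin (2 * g)) ℤ) where
  carrier := {M | (M : Matrix (Fin (2 * g)) (Fin (2 * g)) ℤ) * stdSymplecticJ g *
      (M : Matrix (Fin (2 * g)) (Fin (2 * g)) ℤ)ᵀ = stdSymplecticJ g}
  one_mem' := by
    simp [Units.val_one]
  mul_mem' := by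
    intro a b ha hb
    simp only [Set.mem_setOf_eq] at *
    have : (a : Matrix (Fin (2 * g)) (Fin (2 * g)) ℤ) *
        ((b : Matrix (Fin (2 * g)) (Fin (2 * g)) ℤ) * stdSymplecticJ g *
          (b : Matrix (Fin (2 * g)) (Fin (2 * g)) ℤ)ᵀ) *
        (a : Matrix (Fin (2 * g)) (Fin (2 * g)) ℤ)ᵀ = stdSymplecticJ g := by
      rw [hb, ha]
    rw [Units.val_mul, Matrix.transpose_mul]
    calc (a : Matrix (Fin (2 * g)) (Fin (2 * g)) ℤ) * b * stdSymplecticJ g *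
          ((b : Matrix (Fin (2 * g)) (Fin (2 * g)) ℤ)ᵀ *
            (a : Matrix (Fin (2 * g)) (Fin (2 * g)) ℤ)ᵀ)
        = (a : Matrix (Fin (2 * g)) (Fin (2 * g)) ℤ) *
            ((b : Matrix (Fin (2 * g)) (Fin (2 * g)) ℤ) * stdSymplecticJ g *
              (b : Matrix (Fin (2 * g)) (Fin (2 * g)) ℤ)ᵀ) *
            (a : Matrix (Fin (2 * g)) (Fin (2 * g)) ℤ)ᵀ := by noncomm_ring
      _ = stdSymplecticJ g := this
  inv_mem' := by
    intro M h
    simp only [Set.mem_setOf_eq] at *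
    have hd : IsUnit (M : Matrix (Fin (2 * g)) (Fin (2 * g)) ℤ).det :=
      (Matrix.isUnit_iff_isUnit_det _).mp M.isUnit
    have hdt : IsUnit ((M : Matrix (Fin (2 * g)) (Fin (2 * g)) ℤ)ᵀ).det := by
      rwa [Matrix.det_transpose]
    rw [Matrix.coe_units_inv, Matrix.transpose_nonsing_inv]
    calc (M : Matrix (Fin (2 * g)) (Fin (2 * g)) ℤ)⁻¹ * stdSymplecticJ g *
          ((M : Matrix (Fin (2 * g)) (Fin (2 * g)) ℤ)ᵀ)⁻¹
        = (M : Matrix (Fin (2 * g)) (Fin (2 * g)) ℤ)⁻¹ *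
            ((M : Matrix (Fin (2 * g)) (Fin (2 * g)) ℤ) * stdSymplecticJ g *
              (M : Matrix (Fin (2 * g)) (Fin (2 * g)) ℤ)ᵀ) *
            ((M : Matrix (Fin (2 * g)) (Fin (2 * g)) ℤ)ᵀ)⁻¹ := by rw [h]
      _ = ((M : Matrix (Fin (2 * g)) (Fin (2 * g)) ℤ)⁻¹ *
            (M : Matrix (Fin (2 * g)) (Fin (2 * g)) ℤ)) * stdSymplecticJ g *
            ((M : Matrix (Fin (2 * g)) (Fin (2 * g)) ℤ)ᵀ *
              ((M : Matrix (Fin (2 * g)) (Fin (2 * g)) ℤ)ᵀ)⁻¹) := by noncomm_ring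
      _ = stdSymplecticJ g := by
          rw [Matrix.nonsing_inv_mul _ hd, Matrix.mul_nonsing_inv _ hdt, one_mul, mul_one]

open Filter

variable {G : Type*} [Group G]

noncomputable def wordLength (S : Set G) (g : G) : ℕ :=
  sInf {k | ∃ w : List G, w.length = k ∧ (∀ x ∈ w, x ∈ S ∨ x⁻¹ ∈ S) ∧ w.prod = g}

noncomputable def ballCard (S : Set G) (n : ℕ) : ℕ :=
  Set.ncard {g : G | wordLength S g ≤ n}

noncomputable def growthRate (S : Set G) : ℝ :=
  limUnder atTop (fun n : ℕ => (ballCard S n : ℝ) ^ ((n : ℝ)⁻¹))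

noncomputable def minGrowth (G : Type*) [Group G] : ℝ :=
  sInf {x : ℝ | ∃ S : Finset G, Subgroup.closure (S : Set G) = ⊤ ∧ growthRate (S : Set G) = x}

/-!
Let `a` be an element of a short word ball whose image has an eigenvalue `l` of largest absolute
value in that ball, and let `φ`, `ψ` be left eigenvectors of `a` for `l` and for an eigenvalue `μ`
with `|μ| ≤ 1`. Powers of `a` multiply the ratio `|φ(z)| / |ψ(z)|` by powers of `|l / μ| ≥ |l|`.
On the other hand every vector `z` is moved by one of boundedly many short words into a fixed range
of that ratio, whose width is a polynomial in `|l|`: the traces of short words are integers of size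
`O(|l|)`, so the Gram determinants of the trace form are at least `1` and Cramer's rule is
effective. A bounded power of `a` therefore pushes the range off itself, which makes word balls
double after a bounded number of steps, uniformly in the generating set. That `|l| ≥ 2` can be
reached in a bounded ball follows by counting matrices with bounded integral traces, and that short
words suffice to move every vector follows from the transvections in `Sp(2g, ℤ)`.
-/

open scoped Pointwise Matrix TensorProduct

section WordBalls

/-- The ball of radius `n` around `1` in the Cayley graph of `S`, as the `n`-th pointwise power of
the ball `{1} ∪ S ∪ S⁻¹` of radius `1`. -/
def wordBall (S : Set G) (n : ℕ) : Set G :=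
  (insert 1 (S ∪ S⁻¹)) ^ n

variable {S : Set G} {m n : ℕ} {a b : G}

lemma one_mem_wordBall : 1 ∈ wordBall S n :=
  Set.one_mem_pow (Set.mem_insert 1 _)

lemma wordBall_mono (h : m ≤ n) : wordBall S m ⊆ wordBall S n :=
  Set.pow_subset_pow_right (Set.mem_insert 1 _) h

lemma wordBall_add : wordBall S (m + n) = wordBall S m * wordBall S n :=
  pow_add _ m n

lemma mul_mem_wordBall (ha : a ∈ wordBall S m) (hb : b ∈ wordBall S n) :
    a * b ∈ wordBall S (m + n) :=
  wordBall_add (S := S) ▸ Set.mul_mem_mul ha hb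

lemma pow_mem_wordBall (ha : a ∈ wordBall S m) (j : ℕ) : a ^ j ∈ wordBall S (m * j) := by
  rw [wordBall, pow_mul]
  exact Set.pow_mem_pow ha

lemma finite_wordBall (hS : S.Finite) (n : ℕ) : (wordBall S n).Finite := by
  induction n with
  | zero => exact Set.finite_one
  | succ n ih => exact ih.mul ((hS.union hS.inv).insert 1)

lemma inv_wordBall : (wordBall S n)⁻¹ = wordBall S n := by
  rw [wordBall, ← inv_pow, Set.inv_insert, inv_one, Set.union_inv, inv_inv, Set.union_comm]

lemma mem_wordBall_iff : a ∈ wordBall S n ↔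
    ∃ w : List G, w.length ≤ n ∧ (∀ x ∈ w, x ∈ S ∨ x⁻¹ ∈ S) ∧ w.prod = a := by
  constructor
  · induction n generalizing a with
    | zero => exact fun ha => ⟨[], le_rfl, by simp, (Set.mem_one.1 ha).symm⟩
    | succ n ih =>
      rw [wordBall, pow_succ', Set.mem_mul]
      rintro ⟨x, hx, y, hy, rfl⟩
      obtain ⟨w, hwn, hwS, rfl⟩ := ih hy
      rcases hx with rfl | hx
      · exact ⟨w, by omega, hwS, (one_mul _).symm⟩
      · exact ⟨x :: w, by simpa using hwn, List.forall_mem_cons.2 ⟨hx, hwS⟩, List.prod_cons⟩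
  · rintro ⟨w, hwn, hwS, rfl⟩
    refine wordBall_mono hwn ?_
    clear hwn
    induction w with
    | nil => exact one_mem_wordBall
    | cons x w ih =>
      obtain ⟨hx, hw⟩ := List.forall_mem_cons.1 hwS
      rw [List.prod_cons, List.length_cons, wordBall, pow_succ']
      exact Set.mul_mem_mul (.inr hx) (ih hw)

lemma subset_wordBall_one : S ⊆ wordBall S 1 := fun x hx => by
  rw [wordBall, pow_one]
  exact .inr (.inl hx)

lemma exists_mem_wordBall (hS : Subgroup.closure S = ⊤) (a : G) : ∃ n, a ∈ wordBall S n := by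
  have ha : a ∈ Subgroup.closure S := hS ▸ Subgroup.mem_top a
  induction ha using Subgroup.closure_induction with
  | mem x hx => exact ⟨1, subset_wordBall_one hx⟩
  | one => exact ⟨0, one_mem_wordBall⟩
  | mul x y _ _ hx hy =>
    obtain ⟨m, hm⟩ := hx
    obtain ⟨n, hn⟩ := hy
    exact ⟨m + n, mul_mem_wordBall hm hn⟩
  | inv x _ hx =>
    obtain ⟨m, hm⟩ := hx
    exact ⟨m, inv_wordBall (S := S) ▸ Set.inv_mem_inv.2 hm⟩

lemma setOf_wordLength_le (hS : Subgroup.closure S = ⊤) (n : ℕ) :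
    {a | wordLength S a ≤ n} = wordBall S n := by
  ext a
  rw [Set.mem_ofPred_eq, mem_wordBall_iff]
  constructor
  · intro h
    obtain ⟨m, hm⟩ := exists_mem_wordBall hS a
    obtain ⟨w₀, -, hw₀⟩ := mem_wordBall_iff.1 hm
    obtain ⟨w, hw, hwS⟩ : wordLength S a ∈ {k | ∃ w : List G, w.length = k ∧
        (∀ x ∈ w, x ∈ S ∨ x⁻¹ ∈ S) ∧ w.prod = a} := Nat.sInf_mem ⟨_, w₀, rfl, hw₀⟩
    exact ⟨w, hw.trans_le h, hwS⟩
  · rintro ⟨w, hwn, hw⟩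
    exact le_trans (Nat.sInf_le ⟨w, rfl, hw⟩) hwn

lemma ncard_wordBall_pos (hS : S.Finite) (n : ℕ) : 0 < (wordBall S n).ncard :=
  (Set.ncard_pos (finite_wordBall hS n)).2 ⟨1, one_mem_wordBall⟩

lemma ncard_wordBall_add_le :
    (wordBall S (m + n)).ncard ≤ (wordBall S m).ncard * (wordBall S n).ncard := by
  rw [wordBall_add]
  exact Set.natCard_mul_le

end WordBalls

section GrowthRate

variable {S : Set G}

lemma tendsto_growthRate (hS : S.Finite) (hgen : Subgroup.closure S = ⊤) :
    Tendsto (fun n : ℕ => (ballCard S n : ℝ) ^ ((n : ℝ)⁻¹)) atTop (nhds (growthRate S)) := by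
  have one_le : ∀ n, (1 : ℝ) ≤ (wordBall S n).ncard := fun n => by
    exact_mod_cast ncard_wordBall_pos hS n
  have hsub : Subadditive fun n => Real.log (wordBall S n).ncard := fun m n => by
    rw [← Real.log_mul (zero_lt_one.trans_le (one_le m)).ne' (zero_lt_one.trans_le (one_le n)).ne']
    refine Real.log_le_log (zero_lt_one.trans_le (one_le _)) ?_
    exact_mod_cast ncard_wordBall_add_le
  have hbdd : BddBelow (Set.range fun n : ℕ => Real.log (wordBall S n).ncard / n) :=
    ⟨0, Set.forall_mem_range.2 fun n => div_nonneg (Real.log_nonneg (one_le n)) n.cast_nonneg⟩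
  refine tendsto_nhds_limUnder ⟨Real.exp hsub.lim, ?_⟩
  refine ((Real.continuous_exp.tendsto _).comp (hsub.tendsto_lim hbdd)).congr fun n => ?_
  rw [Function.comp_apply, ballCard, setOf_wordLength_le hgen,
    Real.rpow_def_of_pos (zero_lt_one.trans_le (one_le n)), div_eq_mul_inv]

lemma two_rpow_inv_le_growthRate (hS : S.Finite) (hgen : Subgroup.closure S = ⊤) {C : ℕ}
    (hC : 0 < C) (hdouble : ∀ n, 2 * (wordBall S n).ncard ≤ (wordBall S (n + C)).ncard) :
    (2 : ℝ) ^ ((C : ℝ)⁻¹) ≤ growthRate S := by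
  have two_pow_le : ∀ t, 2 ^ t ≤ (wordBall S (t * C)).ncard := fun t => by
    induction t with
    | zero => simpa using Nat.succ_le_of_lt (ncard_wordBall_pos hS 0)
    | succ t ih => grind
  have hmul : Tendsto (fun t => t * C) atTop atTop := tendsto_id.atTop_mul_const' hC
  refine ge_of_tendsto ((tendsto_growthRate hS hgen).comp hmul) ?_
  filter_upwards [eventually_gt_atTop 0] with t ht
  calc (2 : ℝ) ^ ((C : ℝ)⁻¹) = ((2 : ℝ) ^ t) ^ (((t * C : ℕ) : ℝ)⁻¹) := by
        rw [← Real.rpow_natCast, ← Real.rpow_mul zero_le_two]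
        congr 1
        push_cast
        field_simp
    _ ≤ (ballCard S (t * C) : ℝ) ^ (((t * C : ℕ) : ℝ)⁻¹) := by
        rw [ballCard, setOf_wordLength_le hgen]
        gcongr
        exact_mod_cast two_pow_le t

variable {ι : Type*} [Fintype ι]

lemma ncard_wordBall_le_of_cover (hS : S.Finite) {k : ℕ} {w : ι → G} {A : Set G}
    (hw : ∀ i, w i ∈ wordBall S k) (hcover : ∀ x, ∃ i, w i * x ∈ A) (n : ℕ) :
    (wordBall S n).ncard ≤ Fintype.card ι * (A ∩ wordBall S (k + n)).ncard := by
  have hfin : (A ∩ wordBall S (k + n)).Finite := (finite_wordBall hS _).inter_of_right _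
  have hsub : wordBall S n ⊆ Set.range (fun i => (w i)⁻¹) * (A ∩ wordBall S (k + n)) := by
    intro x hx
    obtain ⟨i, hi⟩ := hcover x
    exact ⟨(w i)⁻¹, ⟨i, rfl⟩, w i * x, ⟨hi, mul_mem_wordBall (hw i) hx⟩, inv_mul_cancel_left _ _⟩
  calc (wordBall S n).ncard
      ≤ (Set.range (fun i => (w i)⁻¹) * (A ∩ wordBall S (k + n))).ncard :=
        Set.ncard_le_ncard hsub ((Set.finite_range _).mul hfin)
    _ ≤ (Set.range fun i => (w i)⁻¹).ncard * (A ∩ wordBall S (k + n)).ncard := Set.natCard_mul_le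
    _ ≤ Fintype.card ι * (A ∩ wordBall S (k + n)).ncard := by
        gcongr
        rw [← Set.image_univ, ← Nat.card_eq_fintype_card, ← Set.ncard_univ]
        exact Set.ncard_image_le

lemma mul_ncard_le_ncard_wordBall (hS : S.Finite) {c : ℕ} {b : G} {A : Set G}
    (hb : b ∈ wordBall S c) (hA : ∀ j : ℕ, 0 < j → ∀ x ∈ A, b ^ j * x ∉ A) (N m : ℕ) :
    N * (A ∩ wordBall S m).ncard ≤ (wordBall S (c * N + m)).ncard := by
  have ne_of_lt : ∀ i j : ℕ, i < j → ∀ x ∈ A, ∀ y ∈ A, b ^ i * x ≠ b ^ j * y := by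
    intro i j hij x hx y hy h
    rw [← Nat.add_sub_of_le hij.le, pow_add, mul_assoc] at h
    exact hA (j - i) (Nat.sub_pos_of_lt hij) y hy (mul_left_cancel h ▸ hx)
  have hinj : Set.InjOn (fun p : ℕ × G => b ^ p.1 * p.2)
      (Set.Iio N ×ˢ (A ∩ wordBall S m)) := by
    rintro ⟨i, x⟩ ⟨-, hx, -⟩ ⟨j, y⟩ ⟨-, hy, -⟩ (h : b ^ i * x = b ^ j * y)
    rcases lt_trichotomy i j with hij | rfl | hij
    · exact (ne_of_lt i j hij x hx y hy h).elim
    · rw [mul_left_cancel h]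
    · exact (ne_of_lt j i hij y hy x hx h.symm).elim
  calc N * (A ∩ wordBall S m).ncard = (Set.Iio N ×ˢ (A ∩ wordBall S m)).ncard := by
        simp [Set.ncard_prod, Set.ncard_eq_toFinset_card' (Set.Iio N)]
    _ = _ := hinj.ncard_image.symm
    _ ≤ _ := by
        refine Set.ncard_le_ncard ?_ (finite_wordBall hS _)
        rintro _ ⟨⟨i, x⟩, ⟨hi, -, hx⟩, rfl⟩
        refine wordBall_mono ?_ (mul_mem_wordBall (pow_mem_wordBall hb i) hx)
        gcongr
        exact (Set.mem_Iio.1 hi).le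

lemma two_mul_ncard_wordBall_le (hS : S.Finite) {k c : ℕ} {w : ι → G} {b : G} {A : Set G}
    (hw : ∀ i, w i ∈ wordBall S k) (hb : b ∈ wordBall S c) (hcover : ∀ x, ∃ i, w i * x ∈ A)
    (hA : ∀ j : ℕ, 0 < j → ∀ x ∈ A, b ^ j * x ∉ A) (n : ℕ) :
    2 * (wordBall S n).ncard ≤ (wordBall S (n + (k + 2 * Fintype.card ι * c))).ncard :=
  calc 2 * (wordBall S n).ncard
      ≤ 2 * (Fintype.card ι * (A ∩ wordBall S (k + n)).ncard) := by
        gcongr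
        exact ncard_wordBall_le_of_cover hS hw hcover n
    _ = (2 * Fintype.card ι) * (A ∩ wordBall S (k + n)).ncard := (mul_assoc _ _ _).symm
    _ ≤ (wordBall S (c * (2 * Fintype.card ι) + (k + n))).ncard :=
        mul_ncard_le_ncard_wordBall hS hb hA _ _
    _ = _ := by congr 2; ring

end GrowthRate

section Escape

variable {K V A : Type*} [Field K] [AddCommGroup V] [Module K V] [Ring A] [Algebra K A]
variable {S : Set G}

/-- A subset of a vector space is not covered by two hyperplanes. For the image of a group in an
algebra, this is the form of irreducibility that survives passing to a finite set of short words. -/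
def EscapesTwoHyperplanes (K : Type*) {V : Type*} [Field K] [AddCommGroup V] [Module K V]
    (Γ : Set V) : Prop :=
  ∀ φ ψ : Module.Dual K V, φ ≠ 0 → ψ ≠ 0 → ∃ x ∈ Γ, φ x ≠ 0 ∧ ψ x ≠ 0

lemma EscapesTwoHyperplanes.span_image_eq_top_or {ι : Type*} {v : ι → V}
    (hv : EscapesTwoHyperplanes K (Set.range v)) {s t : Set ι} (hst : ∀ i, i ∈ s ∨ i ∈ t) :
    Submodule.span K (v '' s) = ⊤ ∨ Submodule.span K (v '' t) = ⊤ := by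
  by_contra! h
  obtain ⟨φ, hφ, hφs⟩ := Submodule.exists_le_ker_of_lt_top _ h.1.lt_top
  obtain ⟨ψ, hψ, hψt⟩ := Submodule.exists_le_ker_of_lt_top _ h.2.lt_top
  obtain ⟨_, ⟨i, rfl⟩, hφi, hψi⟩ := hv φ ψ hφ hψ
  exact (hst i).elim (fun hi => hφi (hφs (Submodule.subset_span ⟨i, hi, rfl⟩)))
    fun hi => hψi (hψt (Submodule.subset_span ⟨i, hi, rfl⟩))

lemma EscapesTwoHyperplanes.span_eq_top {Γ : Set V} (hΓ : EscapesTwoHyperplanes K Γ) :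
    Submodule.span K Γ = ⊤ := by
  rw [← Subtype.range_coe (s := Γ)] at hΓ
  simpa using hΓ.span_image_eq_top_or (s := Set.univ) (t := Set.univ) (by simp)

lemma span_image_wordBall_succ (σ : G →* A) (n : ℕ) :
    Submodule.span K (σ '' wordBall S (n + 1)) =
      Submodule.span K (σ '' wordBall S n) * Submodule.span K (σ '' wordBall S 1) := by
  rw [Submodule.span_mul_span, wordBall_add, Set.image_mul]

variable [FiniteDimensional K A]

-- The spans of the balls form a chain which is constant from the first repetition on.
lemma span_image_wordBall_finrank (hgen : Subgroup.closure S = ⊤) (σ : G →* A) :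
    Submodule.span K (σ '' wordBall S (Module.finrank K A)) = Submodule.span K (Set.range σ) := by
  let W n := Submodule.span K (σ '' wordBall S n)
  have W_mono : Monotone W := fun _ _ h => Submodule.span_mono (Set.image_mono (wordBall_mono h))
  have W_stable : ∀ n, Module.finrank K (W n) = Module.finrank K (W (n + 1)) →
      Module.finrank K (W (n + 1)) = Module.finrank K (W (n + 2)) := fun n h => by
    have hW : W n = W (n + 1) := Submodule.eq_of_le_of_finrank_eq (W_mono n.le_succ) h
    change _ = Module.finrank K (Submodule.span K (σ '' wordBall S (n + 1 + 1)))
    rw [span_image_wordBall_succ]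
    change _ = Module.finrank K ↥(W (n + 1) * W 1)
    rw [← hW, ← span_image_wordBall_succ]
    exact congrArg (fun U : Submodule K A => Module.finrank K U) hW
  refine le_antisymm (Submodule.span_mono (Set.image_subset_range _ _)) (Submodule.span_le.2 ?_)
  rintro _ ⟨γ, rfl⟩
  obtain ⟨m, hm⟩ := exists_mem_wordBall hgen γ
  let N := max (Module.finrank K A) m
  have hN : Module.finrank K (W N) = Module.finrank K (W (Module.finrank K A)) :=
    Nat.stabilises_of_monotone (fun _ _ h => Submodule.finrank_mono (W_mono h))
      (fun _ => Submodule.finrank_le _) W_stable (le_max_left _ _)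
  have hγ : σ γ ∈ W N :=
    Submodule.subset_span (Set.mem_image_of_mem σ (wordBall_mono (le_max_right _ _) hm))
  rwa [← Submodule.eq_of_le_of_finrank_eq (W_mono (le_max_left _ _)) hN.symm] at hγ

lemma exists_words_span_eq (hgen : Subgroup.closure S = ⊤) (σ : G →* A) :
    ∃ d ≤ Module.finrank K A, ∃ w : Fin d → G, (∀ i, w i ∈ wordBall S (Module.finrank K A)) ∧
      Submodule.span K (Set.range fun i => σ (w i)) = Submodule.span K (Set.range σ) := by
  obtain ⟨f, hf, hspan, -⟩ := Submodule.exists_fun_fin_finrank_span_eq K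
    (σ '' wordBall S (Module.finrank K A))
  choose w hw hwf using hf
  refine ⟨_, Submodule.finrank_le _, w, hw, ?_⟩
  rw [show (fun i => σ (w i)) = f from funext hwf, hspan, span_image_wordBall_finrank hgen]

lemma EscapesTwoHyperplanes.exists_words (hgen : Subgroup.closure S = ⊤) {ρ : G →* A}
    (hρ : EscapesTwoHyperplanes K (Set.range ρ)) :
    ∃ d ≤ Module.finrank K A ^ 2, ∃ w : Fin d → G,
      (∀ i, w i ∈ wordBall S (Module.finrank K A ^ 2)) ∧
      EscapesTwoHyperplanes K (Set.range fun i => ρ (w i)) := by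
  let σ : G →* A ⊗[K] A :=
    { toFun := fun γ => ρ γ ⊗ₜ ρ γ
      map_one' := by rw [map_one, Algebra.TensorProduct.one_def]
      map_mul' := fun _ _ => by rw [map_mul, Algebra.TensorProduct.tmul_mul_tmul] }
  have hdim : Module.finrank K (A ⊗[K] A) = Module.finrank K A ^ 2 := by
    rw [Module.finrank_tensorProduct, sq]
  obtain ⟨d, hd, w, hw, hspan⟩ := exists_words_span_eq hgen σ (K := K)
  refine ⟨d, hdim ▸ hd, w, hdim ▸ hw, fun φ ψ hφ hψ => ?_⟩
  by_contra! h
  let φψ : Module.Dual K (A ⊗[K] A) := LinearMap.mul' K K ∘ₗ TensorProduct.map φ ψ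
  have hφψ : ∀ γ, φψ (σ γ) = φ (ρ γ) * ψ (ρ γ) := fun _ => rfl
  have hker : Submodule.span K (Set.range σ) ≤ LinearMap.ker φψ := by
    rw [← hspan, Submodule.span_le]
    rintro _ ⟨i, rfl⟩
    exact (hφψ (w i)).trans (mul_eq_zero.2 (or_iff_not_imp_left.2 (h _ ⟨i, rfl⟩)))
  obtain ⟨_, ⟨γ, rfl⟩, hφγ, hψγ⟩ := hρ φ ψ hφ hψ
  exact mul_ne_zero hφγ hψγ ((hφψ γ).symm.trans (hker (Submodule.subset_span ⟨γ, rfl⟩)))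

end Escape

section LargeTrace

variable {S : Set G}

lemma lt_ncard_image_wordBall {M : Type*} [Monoid M] (hS : S.Finite)
    (hgen : Subgroup.closure S = ⊤) (ρ : G →* M) (hρ : (Set.range ρ).Infinite) (n : ℕ) :
    n < (ρ '' wordBall S n).ncard := by
  classical
  let σ := ρ.toHomUnits
  have hσρ : ∀ γ, (σ γ : M) = ρ γ := ρ.coe_toHomUnits
  have hfin : (σ '' wordBall S 1).Finite := (finite_wordBall hS 1).image σ
  have hclosure : Subgroup.closure (σ '' wordBall S 1) = σ.range := by
    rw [← MonoidHom.map_closure, MonoidHom.range_eq_map,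
      top_le_iff.1 (hgen.ge.trans (Subgroup.closure_mono subset_wordBall_one))]
  have hinf : (Subgroup.closure (σ '' wordBall S 1) : Set Mˣ).Infinite := by
    rw [hclosure, MonoidHom.coe_range]
    refine Set.Infinite.of_image ((↑) : Mˣ → M) ?_
    rwa [← Set.range_comp, show (↑) ∘ σ = ρ from funext hσρ]
  have himage : ρ '' wordBall S n = (↑) '' ((hfin.toFinset ^ n : Finset Mˣ) : Set Mˣ) := by
    rw [Finset.coe_pow, hfin.coe_toFinset, ← Set.image_pow, wordBall, wordBall, pow_one,
      Set.image_image]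
    simp only [hσρ]
  rw [himage, Set.ncard_image_of_injective _ Units.val_injective, Set.ncard_coe_finset]
  exact Finset.add_one_le_card_pow
    (hfin.mem_toFinset.2 ⟨1, one_mem_wordBall, map_one σ⟩) (by rwa [hfin.coe_toFinset]) n

variable {ι κ : Type*} [Fintype ι] [Fintype κ]

lemma eq_of_trace_mul_eq {K : Type*} [Field K] {F : Set (Matrix ι ι K)}
    (hF : Submodule.span K F = ⊤) {M N : Matrix ι ι K}
    (h : ∀ X ∈ F, trace (X * M) = trace (X * N)) : M = N := by
  classical
  have hext : traceLinearMap ι K K ∘ₗ LinearMap.mulRight K M =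
      traceLinearMap ι K K ∘ₗ LinearMap.mulRight K N := LinearMap.ext_on hF h
  exact Matrix.ext_iff_trace_mul_left.2 fun X => LinearMap.congr_fun hext X

variable [DecidableEq ι]

-- Otherwise the integers `tr (ρ (w i) * ρ γ)`, which determine `ρ γ`, take too few values as `γ`
-- runs over the ball of radius `(2 * n + 1) ^ card κ`.
lemma exists_lt_norm_trace (hS : S.Finite) (hgen : Subgroup.closure S = ⊤)
    {ρ : G →* Matrix ι ι ℂ} (htrace : ∀ γ, ∃ z : ℤ, trace (ρ γ) = z)
    (hinf : (Set.range ρ).Infinite) {k : ℕ} {w : κ → G} (hw : ∀ i, w i ∈ wordBall S k)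
    (hspan : Submodule.span ℂ (Set.range fun i => ρ (w i)) = ⊤) (n : ℕ) :
    ∃ γ ∈ wordBall S (k + (2 * n + 1) ^ Fintype.card κ), n < ‖trace (ρ γ)‖ := by
  classical
  by_contra! hsmall
  set c := (2 * n + 1) ^ Fintype.card κ with hc
  let values : Finset ℂ := (Finset.Icc (-n : ℤ) n).image (↑)
  have hvalues : ∀ γ ∈ wordBall S (k + c), trace (ρ γ) ∈ values := fun γ hγ => by
    obtain ⟨z, hz⟩ := htrace γ
    have hzn := hsmall γ hγ
    rw [hz, Complex.norm_intCast] at hzn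
    exact Finset.mem_image.2 ⟨z, Finset.mem_Icc.2 (abs_le.1 (by exact_mod_cast hzn)), hz.symm⟩
  let traces : Matrix ι ι ℂ → κ → ℂ := fun M i => trace (ρ (w i) * M)
  have traces_injective : Function.Injective traces := fun M N hMN =>
    eq_of_trace_mul_eq hspan (Set.forall_mem_range.2 (congrFun hMN))
  have hmaps : traces '' (ρ '' wordBall S c) ⊆
      (Fintype.piFinset fun _ => values : Finset (κ → ℂ)) := by
    rintro _ ⟨_, ⟨γ, hγ, rfl⟩, rfl⟩
    refine Finset.mem_coe.2 (Fintype.mem_piFinset.2 fun i => ?_)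
    simpa only [traces, map_mul] using hvalues _ (mul_mem_wordBall (hw i) hγ)
  have hcard : values.card ≤ 2 * n + 1 :=
    Finset.card_image_le.trans (by rw [Int.card_Icc]; omega)
  refine (lt_ncard_image_wordBall hS hgen ρ hinf c).not_ge ?_
  calc (ρ '' wordBall S c).ncard
      = (traces '' (ρ '' wordBall S c)).ncard :=
        (Set.ncard_image_of_injective _ traces_injective).symm
    _ ≤ (Fintype.piFinset fun _ : κ => values).card := by
        rw [← Set.ncard_coe_finset]
        exact Set.ncard_le_ncard hmaps (Finset.finite_toSet _)
    _ ≤ c := by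
        rw [Fintype.card_piFinset, Finset.prod_const, Finset.card_univ, hc]
        gcongr

end LargeTrace

section GramMatrix

variable {κ : Type*} [Fintype κ] [DecidableEq κ] {T : Matrix κ κ ℂ} {B : ℝ}

lemma norm_adjugate_apply_le (hB : 1 ≤ B) (hT : ∀ i j, ‖T i j‖ ≤ B) (i j : κ) :
    ‖T.adjugate i j‖ ≤ (Fintype.card κ).factorial * B ^ Fintype.card κ := by
  have hentry : ∀ k l, ‖T.updateRow j (Pi.single i 1) k l‖ ≤ B := fun k l => by
    rw [updateRow_apply, Pi.single_apply]
    split_ifs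
    · simpa using hB
    · simpa using zero_le_one.trans hB
    · exact hT k l
  rw [adjugate_apply, ← nsmul_eq_mul]
  exact det_le (abv := NormedField.toAbsoluteValue ℂ) hentry

lemma one_le_norm_det_of_int (hint : ∀ i j, ∃ z : ℤ, T i j = z) (hdet : T.det ≠ 0) :
    1 ≤ ‖T.det‖ := by
  choose z hz using hint
  have hTz : T.det = ((of z).det : ℤ) := by
    rw [Int.cast_det]
    exact congrArg det (ext hz)
  rw [hTz, Complex.norm_intCast]
  exact_mod_cast Int.one_le_abs (by rintro h0; exact hdet (by rw [hTz, h0, Int.cast_zero]))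

lemma norm_apply_le_of_norm_mulVec_le (hint : ∀ i j, ∃ z : ℤ, T i j = z) (hdet : T.det ≠ 0)
    (hB : 1 ≤ B) (hT : ∀ i j, ‖T i j‖ ≤ B) {c : κ → ℂ} {s : ℝ} (hs : ∀ j, ‖(T *ᵥ c) j‖ ≤ s)
    (i : κ) :
    ‖c i‖ ≤ Fintype.card κ * ((Fintype.card κ).factorial * B ^ Fintype.card κ) * s := by
  have hcramer : T.det * c i = ∑ j, T.adjugate i j * (T *ᵥ c) j := by
    change _ = (T.adjugate *ᵥ (T *ᵥ c)) i
    rw [mulVec_mulVec, adjugate_mul, smul_mulVec, one_mulVec, Pi.smul_apply, smul_eq_mul]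
  calc ‖c i‖ ≤ ‖T.det‖ * ‖c i‖ :=
        le_mul_of_one_le_left (norm_nonneg _) (one_le_norm_det_of_int hint hdet)
    _ = ‖∑ j, T.adjugate i j * (T *ᵥ c) j‖ := by rw [← norm_mul, hcramer]
    _ ≤ ∑ _j : κ, ((Fintype.card κ).factorial * B ^ Fintype.card κ) * s := by
        refine norm_sum_le_of_le _ fun j _ => ?_
        rw [norm_mul]
        gcongr
        exacts [norm_adjugate_apply_le hB hT i j, hs j]
    _ = _ := by rw [Finset.sum_const, Finset.card_univ, nsmul_eq_mul]; ring

/-- The constant of `norm_dual_apply_le` for an `N`-dimensional space and Gram matrices with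
entries bounded by `B`; only its polynomial growth in `B` matters. -/
noncomputable def gramConst (N : ℕ) (B : ℝ) : ℝ :=
  N * (N * (N.factorial * B ^ N))

lemma gramConst_nonneg {N : ℕ} (hB : 0 ≤ B) : 0 ≤ gramConst N B := by
  unfold gramConst
  positivity

-- An invertible integral Gram matrix has determinant at least `1` in absolute value, so Cramer's
-- rule bounds the coordinates of `v` in a basis taken from `F` by its pairings with `F`.
lemma norm_dual_apply_le {V : Type*} [AddCommGroup V] [Module ℂ V] [FiniteDimensional ℂ V]
    {β : LinearMap.BilinForm ℂ V} (hβ : β.Nondegenerate) {F : Set V}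
    (hF : Submodule.span ℂ F = ⊤) (hint : ∀ x ∈ F, ∀ y ∈ F, ∃ z : ℤ, β x y = z) (hB : 1 ≤ B)
    (hβB : ∀ x ∈ F, ∀ y ∈ F, ‖β x y‖ ≤ B) {θ : Module.Dual ℂ V} {v : V} {s t : ℝ}
    (hs : ∀ x ∈ F, ‖β x v‖ ≤ s) (ht : ∀ x ∈ F, ‖θ x‖ ≤ t) :
    ‖θ v‖ ≤ gramConst (Module.finrank ℂ V) B * s * t := by
  classical
  let b := Module.Basis.ofSpan hF.ge
  have : Fintype _ := FiniteDimensional.fintypeBasisIndex b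
  have hbF : ∀ i, b i ∈ F := fun i => Module.Basis.ofSpan_subset hF.ge ⟨i, rfl⟩
  let T := LinearMap.BilinForm.toMatrix b β
  have hT : ∀ i j, T i j = β (b i) (b j) := LinearMap.BilinForm.toMatrix_apply b β
  have hdet : T.det ≠ 0 := (LinearMap.BilinForm.nondegenerate_iff_det_ne_zero b).1 hβ
  have hTv : ∀ i, (T *ᵥ b.repr v) i = β (b i) v := fun i => by
    rw [β.apply_eq_dotProduct_toMatrix_mulVec b, b.repr_self, Finsupp.single_eq_pi_single,
      single_one_dotProduct]
  have hcoord := norm_apply_le_of_norm_mulVec_le (c := b.repr v) (s := s)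
    (fun i j => hT i j ▸ hint _ (hbF i) _ (hbF j)) hdet hB
    (fun i j => hT i j ▸ hβB _ (hbF i) _ (hbF j)) (fun i => hTv i ▸ hs _ (hbF i))
  rw [← Module.finrank_eq_card_basis b] at hcoord
  set N := Module.finrank ℂ V
  calc ‖θ v‖ = ‖∑ i, b.repr v i * θ (b i)‖ := by
        conv_lhs => rw [← b.sum_repr v, map_sum]
        simp only [map_smul, smul_eq_mul]
    _ ≤ ∑ _i, N * (N.factorial * B ^ N) * s * t := by
        refine norm_sum_le_of_le _ fun i _ => ?_
        rw [norm_mul]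
        have hi := hcoord i
        gcongr
        exacts [(norm_nonneg _).trans hi, ht _ (hbF i)]
    _ = gramConst N B * s * t := by
        rw [Finset.sum_const, Finset.card_univ, ← Module.finrank_eq_card_basis b, nsmul_eq_mul,
          gramConst]
        ring

end GramMatrix

section IntegralFrame

variable {ι κ : Type*} [Fintype ι]

/-- The bilinear form `tr (X * Y)` on square matrices. -/
def matrixTraceForm (K ι : Type*) [Field K] [Fintype ι] :
    LinearMap.BilinForm K (Matrix ι ι K) :=
  (LinearMap.mul K (Matrix ι ι K)).compr₂ (traceLinearMap ι K K)

lemma matrixTraceForm_nondegenerate (K : Type*) [Field K] :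
    (matrixTraceForm K ι).Nondegenerate := by
  classical
  constructor <;> intro X hX
  · refine Matrix.ext_iff_trace_mul_right.2 fun Y => ?_
    rw [zero_mul, trace_zero]
    exact hX Y
  · refine Matrix.ext_iff_trace_mul_left.2 fun Y => ?_
    rw [mul_zero, trace_zero]
    exact hX Y

/-- The matrix coefficient `X ↦ φ ⬝ᵥ X *ᵥ x`, as a linear functional of the matrix. -/
def matrixCoeff {K : Type*} [Field K] (φ x : ι → K) : Module.Dual K (Matrix ι ι K) :=
  dotProductBilin K K φ ∘ₗ (mulVecBilin K K).flip x

lemma matrixCoeff_apply {K : Type*} [Field K] (φ x : ι → K) (X : Matrix ι ι K) :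
    matrixCoeff φ x X = φ ⬝ᵥ X *ᵥ x := rfl

lemma matrixCoeff_ne_zero {K : Type*} [Field K] {φ x : ι → K} (hφ : φ ≠ 0) (hx : x ≠ 0) :
    matrixCoeff φ x ≠ 0 := by
  classical
  obtain ⟨i, hi⟩ := Function.ne_iff.1 hφ
  obtain ⟨j, hj⟩ := Function.ne_iff.1 hx
  refine fun h => mul_ne_zero hi hj ?_
  have hij : φ ⬝ᵥ single i j 1 *ᵥ x = 0 := LinearMap.congr_fun h (single i j 1)
  rwa [single_mulVec, one_mul, ← Pi.single, dotProduct_single] at hij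

lemma trace_mul_vecMulVec_mul {K : Type*} [Field K] (ψ x : ι → K) (A X Y : Matrix ι ι K) :
    trace (A * (X * vecMulVec x ψ * Y)) = matrixCoeff ψ x (Y * A * X) := by
  rw [← mul_assoc, ← mul_assoc, mul_vecMulVec, vecMulVec_mul, trace_vecMulVec, dotProduct_comm,
    ← dotProduct_mulVec, mulVec_mulVec, ← mul_assoc, matrixCoeff_apply]

lemma matrixCoeff_mul_vecMulVec_mul {K : Type*} [Field K] (φ ψ x y : ι → K) (X Y : Matrix ι ι K) :
    matrixCoeff φ y (X * vecMulVec x ψ * Y) = matrixCoeff φ x X * matrixCoeff ψ y Y := by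
  simp only [matrixCoeff_apply, mul_vecMulVec, vecMulVec_mul, vecMulVec_mulVec,
    dotProduct_mulVec, op_smul_eq_smul, dotProduct_smul, smul_eq_mul, mul_comm]

lemma norm_mul_norm_le_of_forall [Fintype κ] {a b : κ → ℂ} {C : ℝ} (hC : 0 ≤ C)
    (h : ∀ i j, ‖a i‖ * ‖b j‖ ≤ C) : ‖a‖ * ‖b‖ ≤ C := by
  have hab : ∀ i, ‖b‖ * ‖a i‖ ≤ C := fun i => by
    rw [mul_comm, ← norm_smul, pi_norm_le_iff_of_nonneg hC]
    exact fun j => (norm_mul _ _).trans_le (h i j)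
  rw [mul_comm, ← norm_norm b, ← norm_smul, pi_norm_le_iff_of_nonneg hC]
  exact fun i => by simpa only [Pi.smul_apply, norm_smul, norm_norm] using hab i

/-- The factor by which some element of an integral frame nearly realises the norms of two linear
functionals simultaneously, see `IntegralFrame.exists_norm_dual_le`. -/
noncomputable def dominationConst (N : ℕ) (B : ℝ) : ℝ :=
  1 + gramConst N B * B

/-- The size of the matrix coefficients of a family of matrices at a pair of vectors. -/
noncomputable def coeffNorm [Fintype κ] (W : κ → Matrix ι ι ℂ) (φ x : ι → ℂ) : ℝ :=
  ‖fun i => matrixCoeff φ x (W i)‖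

/-- The multiplicative width of the ping-pong table, see `IntegralFrame.exists_table`. -/
noncomputable def tableConst (N : ℕ) (B : ℝ) : ℝ :=
  gramConst N B ^ 2 * B * dominationConst N B

/-- The quotient of the absolute values of two linear functionals, in projective terms the
absolute value of a coordinate. It is `0` where the denominator `ψ` vanishes. -/
noncomputable def coeffRatio (φ ψ z : ι → ℂ) : ℝ :=
  ‖φ ⬝ᵥ z‖ / ‖ψ ⬝ᵥ z‖

/-- A finite family of matrices meeting the hypotheses of the ping-pong argument: it escapes pairs
of hyperplanes, and the traces of its short words are integers or are bounded by `B`. -/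
structure IntegralFrame (W : κ → Matrix ι ι ℂ) (B : ℝ) : Prop where
  one_le : 1 ≤ B
  escapes : EscapesTwoHyperplanes ℂ (Set.range W)
  trace_mul_int : ∀ i j, ∃ z : ℤ, trace (W i * W j) = z
  norm_trace_mul_le : ∀ i j, ‖trace (W i * W j)‖ ≤ B
  norm_trace_mul_mul_mul_le : ∀ a b c d, ‖trace (W a * (W b * W c * W d))‖ ≤ B

namespace IntegralFrame

variable {W : κ → Matrix ι ι ℂ} {B : ℝ}

lemma norm_dual_le (hW : IntegralFrame W B) {s : Set κ} (hs : Submodule.span ℂ (W '' s) = ⊤)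
    {θ : Module.Dual ℂ (Matrix ι ι ℂ)} {M : Matrix ι ι ℂ} {p q : ℝ}
    (hM : ∀ i ∈ s, ‖trace (W i * M)‖ ≤ p) (hθ : ∀ i ∈ s, ‖θ (W i)‖ ≤ q) :
    ‖θ M‖ ≤ gramConst (Module.finrank ℂ (Matrix ι ι ℂ)) B * p * q := by
  refine norm_dual_apply_le (matrixTraceForm_nondegenerate ℂ) hs ?_ hW.one_le ?_
    (Set.forall_mem_image.2 hM) (Set.forall_mem_image.2 hθ)
  · rintro _ ⟨i, -, rfl⟩ _ ⟨j, -, rfl⟩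
    exact hW.trace_mul_int i j
  · rintro _ ⟨i, -, rfl⟩ _ ⟨j, -, rfl⟩
    exact hW.norm_trace_mul_le i j

lemma span_image_univ (hW : IntegralFrame W B) : Submodule.span ℂ (W '' Set.univ) = ⊤ := by
  rw [Set.image_univ]
  exact hW.escapes.span_eq_top

section CoeffNorm

variable [Fintype κ]

lemma norm_dual_pos (hW : IntegralFrame W B) {θ : Module.Dual ℂ (Matrix ι ι ℂ)} (hθ : θ ≠ 0) :
    0 < ‖fun i => θ (W i)‖ := by
  refine norm_pos_iff.2 fun h => hθ (LinearMap.ext_on_range hW.escapes.span_eq_top fun i => ?_)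
  exact congrFun h i

lemma exists_norm_dual_le (hW : IntegralFrame W B) {θ η : Module.Dual ℂ (Matrix ι ι ℂ)}
    (hθ : θ ≠ 0) (hη : η ≠ 0) :
    ∃ i,
      ‖fun j => θ (W j)‖ ≤ dominationConst (Module.finrank ℂ (Matrix ι ι ℂ)) B * ‖θ (W i)‖ ∧
      ‖fun j => η (W j)‖ ≤ dominationConst (Module.finrank ℂ (Matrix ι ι ℂ)) B * ‖η (W i)‖ := by
  set K := gramConst (Module.finrank ℂ (Matrix ι ι ℂ)) B
  set D := dominationConst (Module.finrank ℂ (Matrix ι ι ℂ)) B with hD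
  have hB : 0 < B := zero_lt_one.trans_le hW.one_le
  have hK : 0 ≤ K := gramConst_nonneg hB.le
  have hD_pos : 0 < D := by
    rw [hD, dominationConst]
    positivity
  have not_span : ∀ ζ : Module.Dual ℂ (Matrix ι ι ℂ), ζ ≠ 0 →
      Submodule.span ℂ (W '' {i | D * ‖ζ (W i)‖ < ‖fun j => ζ (W j)‖}) ≠ ⊤ := fun ζ hζ hspan => by
    have hpos := hW.norm_dual_pos hζ
    set t := ‖fun j => ζ (W j)‖
    have hle : t ≤ K * B * (t / D) := (pi_norm_le_iff_of_nonneg (by positivity)).2 fun i =>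
      hW.norm_dual_le hspan (fun j _ => hW.norm_trace_mul_le j i)
        fun j hj => (le_div_iff₀' hD_pos).2 (le_of_lt hj)
    rw [mul_div_assoc', le_div_iff₀ hD_pos, hD, dominationConst] at hle
    linarith
  by_contra! h
  refine (hW.escapes.span_image_eq_top_or fun i => ?_).elim (not_span θ hθ) (not_span η hη)
  exact (lt_or_ge _ (‖fun j => θ (W j)‖)).imp_right (h i)

lemma coeffNorm_pos (hW : IntegralFrame W B) {φ x : ι → ℂ} (hφ : φ ≠ 0) (hx : x ≠ 0) :
    0 < coeffNorm W φ x :=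
  hW.norm_dual_pos (matrixCoeff_ne_zero hφ hx)

-- The Gram estimate is applied twice, to `W k * W a * W i` and to `W i * (x ⊗ ψ) * W k`: the
-- coefficient of the former at `ψ, x` is the pairing of `W a` with the latter.
lemma coeffNorm_mul_coeffNorm_le (hW : IntegralFrame W B) (φ ψ x y : ι → ℂ) :
    coeffNorm W φ x * coeffNorm W ψ y ≤
      gramConst (Module.finrank ℂ (Matrix ι ι ℂ)) B ^ 2 * B *
        (coeffNorm W ψ x * coeffNorm W φ y) := by
  set K := gramConst (Module.finrank ℂ (Matrix ι ι ℂ)) B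
  have hB : 0 < B := zero_lt_one.trans_le hW.one_le
  have : 0 ≤ K := gramConst_nonneg hB.le
  have entry_le : ∀ θ z i, ‖matrixCoeff θ z (W i)‖ ≤ coeffNorm W θ z := fun θ z i =>
    norm_le_pi_norm (fun j => matrixCoeff θ z (W j)) i
  have product_le : ∀ i k,
      ‖matrixCoeff φ x (W i)‖ * ‖matrixCoeff ψ y (W k)‖ ≤
        K ^ 2 * B * (coeffNorm W ψ x * coeffNorm W φ y) := fun i k => by
    have trace_le : ∀ a, ‖trace (W a * (W i * vecMulVec x ψ * W k))‖ ≤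
        K * B * coeffNorm W ψ x := fun a => by
      rw [trace_mul_vecMulVec_mul]
      exact hW.norm_dual_le hW.span_image_univ
        (fun j _ => hW.norm_trace_mul_mul_mul_le j k a i) fun j _ => entry_le ψ x j
    rw [← norm_mul, ← matrixCoeff_mul_vecMulVec_mul]
    refine (hW.norm_dual_le hW.span_image_univ (fun a _ => trace_le a)
      fun j _ => entry_le φ y j).trans_eq ?_
    ring
  have hψx : 0 ≤ coeffNorm W ψ x := norm_nonneg _
  have hφy : 0 ≤ coeffNorm W φ y := norm_nonneg _
  exact norm_mul_norm_le_of_forall (by positivity) product_le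

end CoeffNorm

lemma exists_table [Finite κ] (hW : IntegralFrame W B) {φ ψ x : ι → ℂ} (hφ : φ ≠ 0)
    (hψ : ψ ≠ 0) (hx : x ≠ 0) :
    ∃ c > 0, ∀ z ≠ 0, ∃ i,
      c ≤ tableConst (Module.finrank ℂ (Matrix ι ι ℂ)) B * coeffRatio φ ψ (W i *ᵥ z) ∧
      coeffRatio φ ψ (W i *ᵥ z) ≤ tableConst (Module.finrank ℂ (Matrix ι ι ℂ)) B * c := by
  have := Fintype.ofFinite κ
  refine ⟨coeffNorm W φ x / coeffNorm W ψ x,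
    div_pos (hW.coeffNorm_pos hφ hx) (hW.coeffNorm_pos hψ hx), fun z hz => ?_⟩
  obtain ⟨i, hφi, hψi⟩ := hW.exists_norm_dual_le (matrixCoeff_ne_zero hφ hz)
    (matrixCoeff_ne_zero hψ hz)
  set K := gramConst (Module.finrank ℂ (Matrix ι ι ℂ)) B
  set D := dominationConst (Module.finrank ℂ (Matrix ι ι ℂ)) B
  change coeffNorm W φ z ≤ D * ‖φ ⬝ᵥ W i *ᵥ z‖ at hφi
  change coeffNorm W ψ z ≤ D * ‖ψ ⬝ᵥ W i *ᵥ z‖ at hψi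
  have hB : 0 < B := zero_lt_one.trans_le hW.one_le
  have hK : 0 ≤ K := gramConst_nonneg hB.le
  have entry_le : ∀ θ, ‖θ ⬝ᵥ W i *ᵥ z‖ ≤ coeffNorm W θ z := fun θ =>
    norm_le_pi_norm (fun j => matrixCoeff θ z (W j)) i
  have hφx := hW.coeffNorm_pos hφ hx
  have hψx := hW.coeffNorm_pos hψ hx
  have hψ_pos : 0 < ‖ψ ⬝ᵥ W i *ᵥ z‖ := (norm_nonneg _).lt_of_ne' fun h0 =>
    (hW.coeffNorm_pos hψ hz).not_ge (by rwa [h0, mul_zero] at hψi)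
  refine ⟨i, ?_⟩
  rw [coeffRatio, mul_div_assoc', mul_div_assoc', div_le_div_iff₀ hψx hψ_pos,
    div_le_div_iff₀ hψ_pos hψx]
  constructor
  · calc coeffNorm W φ x * ‖ψ ⬝ᵥ W i *ᵥ z‖
        ≤ coeffNorm W φ x * coeffNorm W ψ z := by gcongr; exact entry_le ψ
      _ ≤ K ^ 2 * B * (coeffNorm W ψ x * coeffNorm W φ z) :=
          hW.coeffNorm_mul_coeffNorm_le φ ψ x z
      _ ≤ K ^ 2 * B * (coeffNorm W ψ x * (D * ‖φ ⬝ᵥ W i *ᵥ z‖)) := by gcongr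
      _ = _ := by rw [tableConst]; ring
  · calc ‖φ ⬝ᵥ W i *ᵥ z‖ * coeffNorm W ψ x
        ≤ coeffNorm W φ z * coeffNorm W ψ x := by gcongr; exact entry_le φ
      _ ≤ K ^ 2 * B * (coeffNorm W ψ z * coeffNorm W φ x) :=
          hW.coeffNorm_mul_coeffNorm_le φ ψ z x
      _ ≤ K ^ 2 * B * ((D * ‖ψ ⬝ᵥ W i *ᵥ z‖) * coeffNorm W φ x) := by gcongr
      _ = _ := by rw [tableConst]; ring

end IntegralFrame

end IntegralFrame

section DominantEigenvalue

variable {ι : Type*} [Fintype ι] [DecidableEq ι]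

lemma exists_vecMul_eq_smul_of_mem_roots_charpoly {K : Type*} [Field K] {a : Matrix ι ι K} {μ : K}
    (hμ : μ ∈ a.charpoly.roots) : ∃ φ ≠ 0, φ ᵥ* a = μ • φ := by
  have hdet : (scalar ι μ - a).det = 0 := by
    rw [← eval_charpoly]
    exact (Polynomial.mem_roots'.1 hμ).2
  obtain ⟨φ, hφ, hφa⟩ := exists_vecMul_eq_zero_iff.2 hdet
  refine ⟨φ, hφ, ?_⟩
  rw [vecMul_sub, sub_eq_zero, scalar_apply, ← smul_one_eq_diagonal, vecMul_smul, vecMul_one]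
    at hφa
  exact hφa.symm

lemma card_roots_charpoly (a : Matrix ι ι ℂ) : a.charpoly.roots.card = Fintype.card ι := by
  rw [IsAlgClosed.card_roots_eq_natDegree, charpoly_natDegree_eq_dim]

lemma norm_trace_le_of_forall_mem_roots {a : Matrix ι ι ℂ} {R : ℝ}
    (h : ∀ μ ∈ a.charpoly.roots, ‖μ‖ ≤ R) : ‖a.trace‖ ≤ Fintype.card ι * R := by
  rw [trace_eq_sum_roots_charpoly, ← card_roots_charpoly a, ← nsmul_eq_mul,
    ← Multiset.card_map norm]
  exact (norm_multiset_sum_le _).trans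
    (Multiset.sum_le_card_nsmul _ _ (Multiset.forall_mem_map_iff.2 h))

lemma exists_mem_roots_charpoly_norm_le_one [Nonempty ι] {a : Matrix ι ι ℂ} (ha : ‖a.det‖ ≤ 1) :
    ∃ μ ∈ a.charpoly.roots, ‖μ‖ ≤ 1 := by
  by_contra! hlarge
  refine ha.not_gt ?_
  rw [det_eq_prod_roots_charpoly]
  refine Multiset.prod_induction_nonempty (fun μ : ℂ => 1 < ‖μ‖)
    (fun μ ν hμ hν => ?_) (fun h => ?_) hlarge
  · rw [norm_mul]
    exact one_lt_mul_of_lt_of_le hμ hν.le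
  · exact Fintype.card_ne_zero (α := ι) (by rw [← card_roots_charpoly a, h]; rfl)

lemma exists_dominant_eigenvectors [Nonempty ι] {F : Set (Matrix ι ι ℂ)} (hF : F.Finite)
    (hF_nonempty : F.Nonempty) (hdet : ∀ M ∈ F, ‖M.det‖ = 1) :
    ∃ a ∈ F, ∃ φ ψ : ι → ℂ, ∃ l μ : ℂ, φ ≠ 0 ∧ ψ ≠ 0 ∧ φ ᵥ* a = l • φ ∧ ψ ᵥ* a = μ • ψ ∧
      0 < ‖μ‖ ∧ ‖μ‖ ≤ 1 ∧ ∀ M ∈ F, ‖M.trace‖ ≤ Fintype.card ι * ‖l‖ := by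
  let Z : Finset (Σ _ : Matrix ι ι ℂ, ℂ) := hF.toFinset.sigma fun M => M.charpoly.roots.toFinset
  have mem_Z : ∀ M μ, ⟨M, μ⟩ ∈ Z ↔ M ∈ F ∧ μ ∈ M.charpoly.roots := fun M μ => by
    rw [Finset.mem_sigma, hF.mem_toFinset, Multiset.mem_toFinset]
  have root_le_one : ∀ M ∈ F, ∃ μ ∈ M.charpoly.roots, ‖μ‖ ≤ 1 := fun M hM =>
    exists_mem_roots_charpoly_norm_le_one (hdet M hM).le
  obtain ⟨M₀, hM₀⟩ := hF_nonempty
  obtain ⟨μ₀, hμ₀, -⟩ := root_le_one M₀ hM₀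
  obtain ⟨⟨a, l⟩, hal, hmax⟩ :=
    Z.exists_max_image (fun p => ‖p.2‖) ⟨⟨M₀, μ₀⟩, (mem_Z _ _).2 ⟨hM₀, hμ₀⟩⟩
  obtain ⟨ha, hl⟩ := (mem_Z _ _).1 hal
  obtain ⟨μ, hμ, hμ_le⟩ := root_le_one a ha
  have hμ_ne : μ ≠ 0 := by
    rintro rfl
    have hdet_a := hdet a ha
    rw [det_eq_prod_roots_charpoly, Multiset.prod_eq_zero hμ, norm_zero] at hdet_a
    exact zero_ne_one hdet_a
  obtain ⟨φ, hφ, hφa⟩ := exists_vecMul_eq_smul_of_mem_roots_charpoly hl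
  obtain ⟨ψ, hψ, hψa⟩ := exists_vecMul_eq_smul_of_mem_roots_charpoly hμ
  exact ⟨a, ha, φ, ψ, l, μ, hφ, hψ, hφa, hψa, norm_pos_iff.2 hμ_ne, hμ_le, fun M hM =>
    norm_trace_le_of_forall_mem_roots fun ν hν => hmax ⟨M, ν⟩ ((mem_Z _ _).2 ⟨hM, hν⟩)⟩

end DominantEigenvalue

section PingPong

variable {ι κ : Type*} [Fintype ι] [DecidableEq ι] {S : Set G}

lemma dotProduct_pow_mulVec {R : Type*} [CommRing R] {a : Matrix ι ι R} {φ : ι → R} {l : R}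
    (h : φ ᵥ* a = l • φ) (k : ℕ) (z : ι → R) : φ ⬝ᵥ a ^ k *ᵥ z = l ^ k * φ ⬝ᵥ z := by
  induction k with
  | zero => simp
  | succ k ih =>
    rw [pow_succ', ← mulVec_mulVec, dotProduct_mulVec, h, smul_dotProduct, ih, smul_eq_mul,
      pow_succ', mul_assoc]

lemma coeffRatio_pow_mulVec {a : Matrix ι ι ℂ} {φ ψ : ι → ℂ} {l μ : ℂ} (hφ : φ ᵥ* a = l • φ)
    (hψ : ψ ᵥ* a = μ • ψ) (k : ℕ) (z : ι → ℂ) :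
    coeffRatio φ ψ (a ^ k *ᵥ z) = (‖l‖ / ‖μ‖) ^ k * coeffRatio φ ψ z := by
  rw [coeffRatio, coeffRatio, dotProduct_pow_mulVec hφ, dotProduct_pow_mulVec hψ, norm_mul,
    norm_mul, norm_pow, norm_pow, div_pow, mul_div_mul_comm]

lemma lt_coeffRatio_pow_mulVec {a : Matrix ι ι ℂ} {φ ψ : ι → ℂ} {l μ : ℂ} (hφ : φ ᵥ* a = l • φ)
    (hψ : ψ ᵥ* a = μ • ψ) (hμ : 0 < ‖μ‖) (hμ_le : ‖μ‖ ≤ 1) {k : ℕ} {E c : ℝ} (hE : 0 ≤ E)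
    (hk : E ^ 2 < ‖l‖ ^ k) (hc : 0 < c) {z : ι → ℂ} (hz : c ≤ E * coeffRatio φ ψ z) :
    E * c < coeffRatio φ ψ (a ^ k *ᵥ z) := by
  have hr : 0 < coeffRatio φ ψ z := pos_of_mul_pos_right (hc.trans_le hz) hE
  calc E * c ≤ E * (E * coeffRatio φ ψ z) := by gcongr
    _ = E ^ 2 * coeffRatio φ ψ z := by ring
    _ < ‖l‖ ^ k * coeffRatio φ ψ z := by gcongr
    _ ≤ (‖l‖ / ‖μ‖) ^ k * coeffRatio φ ψ z := by
        gcongr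
        exact le_div_self (norm_nonneg _) hμ hμ_le
    _ = coeffRatio φ ψ (a ^ k *ᵥ z) := (coeffRatio_pow_mulVec hφ hψ k z).symm

lemma tableConst_nonneg {N : ℕ} {B : ℝ} (hB : 0 ≤ B) : 0 ≤ tableConst N B := by
  have := gramConst_nonneg (N := N) hB
  unfold tableConst dominationConst
  positivity

lemma tableConst_le (N : ℕ) {B : ℝ} (hB : 1 ≤ B) :
    tableConst N B ≤ gramConst N 1 ^ 2 * (1 + gramConst N 1) * B ^ (3 * N + 2) := by
  have hgram : gramConst N B = gramConst N 1 * B ^ N := by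
    rw [gramConst, gramConst]
    ring
  have : 0 ≤ gramConst N 1 := gramConst_nonneg zero_le_one
  calc tableConst N B
      = gramConst N 1 ^ 2 * (1 + gramConst N 1 * B ^ (N + 1)) * B ^ (2 * N + 1) := by
        rw [tableConst, dominationConst, hgram]
        ring
    _ ≤ gramConst N 1 ^ 2 * (B ^ (N + 1) + gramConst N 1 * B ^ (N + 1)) * B ^ (2 * N + 1) := by
        gcongr
        exact one_le_pow₀ hB
    _ = _ := by ring

lemma exists_mul_pow_lt_pow (C : ℝ) (p : ℕ) :
    ∃ L : ℕ, ∀ R : ℝ, 2 ≤ R → ∀ k ≥ L, C * R ^ p < R ^ k := by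
  obtain ⟨l, hl⟩ := pow_unbounded_of_one_lt C one_lt_two
  refine ⟨l + p, fun R hR k hk => ?_⟩
  have : 0 < R := two_pos.trans_le hR
  calc C * R ^ p < R ^ l * R ^ p := by
        gcongr
        exact hl.trans_le (by gcongr)
    _ = R ^ (l + p) := (pow_add _ _ _).symm
    _ ≤ R ^ k := pow_le_pow_right₀ (by linarith) (by omega)

lemma exists_tableConst_sq_lt_pow (N : ℕ) {n : ℕ} (hn : 0 < n) :
    ∃ L : ℕ, ∀ R : ℝ, 2 ≤ R → ∀ k ≥ L, tableConst N (n * R) ^ 2 < R ^ k := by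
  set q := gramConst N 1 ^ 2 * (1 + gramConst N 1)
  obtain ⟨L, hpow⟩ :=
    exists_mul_pow_lt_pow ((q * n ^ (3 * N + 2)) ^ 2) ((3 * N + 2) * 2)
  refine ⟨L, fun R hR k hk => lt_of_le_of_lt ?_ (hpow R hR k hk)⟩
  have hn_one : (1 : ℝ) ≤ n := by exact_mod_cast hn
  have hnR : 1 ≤ n * R := by nlinarith
  calc tableConst N (n * R) ^ 2 ≤ (q * (n * R) ^ (3 * N + 2)) ^ 2 := by
        gcongr
        exacts [tableConst_nonneg (by positivity), tableConst_le N hnR]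
    _ = _ := by ring

lemma integralFrame_of_mem_wordBall {ρ : G →* Matrix ι ι ℂ}
    (htrace : ∀ γ, ∃ z : ℤ, trace (ρ γ) = z) {k : ℕ} {w : κ → G} (hw : ∀ i, w i ∈ wordBall S k)
    (hesc : EscapesTwoHyperplanes ℂ (Set.range fun i => ρ (w i))) {B : ℝ} (hB : 1 ≤ B)
    (hBall : ∀ γ ∈ wordBall S (4 * k), ‖trace (ρ γ)‖ ≤ B) :
    IntegralFrame (fun i => ρ (w i)) B where
  one_le := hB
  escapes := hesc
  trace_mul_int i j := by simpa only [map_mul] using htrace (w i * w j)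
  norm_trace_mul_le i j := by
    simpa only [map_mul] using hBall (w i * w j)
      (wordBall_mono (by omega) (mul_mem_wordBall (hw i) (hw j)))
  norm_trace_mul_mul_mul_le a b c d := by
    simpa only [map_mul] using hBall (w a * (w b * w c * w d)) (wordBall_mono (by omega)
      (mul_mem_wordBall (hw a) (mul_mem_wordBall (mul_mem_wordBall (hw b) (hw c)) (hw d))))

lemma two_mul_ncard_wordBall_le_of_integralFrame [Fintype κ] [Nonempty ι] (hS : S.Finite)
    {ρ : G →* Matrix ι ι ℂ} {k m L : ℕ} {w : κ → G} (hw : ∀ i, w i ∈ wordBall S k)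
    {B : ℝ} (hW : IntegralFrame (fun i => ρ (w i)) B) {a : G} (ha : a ∈ wordBall S m)
    {φ ψ : ι → ℂ} {l μ : ℂ} (hφ : φ ≠ 0) (hψ : ψ ≠ 0) (hφa : φ ᵥ* ρ a = l • φ)
    (hψa : ψ ᵥ* ρ a = μ • ψ) (hμ : 0 < ‖μ‖) (hμ_le : ‖μ‖ ≤ 1)
    (hl : ∀ j ≥ L, tableConst (Module.finrank ℂ (Matrix ι ι ℂ)) B ^ 2 < ‖l‖ ^ j) (n : ℕ) :
    2 * (wordBall S n).ncard ≤
      (wordBall S (n + (k + 2 * Fintype.card κ * (m * L)))).ncard := by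
  set E := tableConst (Module.finrank ℂ (Matrix ι ι ℂ)) B
  have hE : 0 ≤ E := tableConst_nonneg (zero_le_one.trans hW.one_le)
  obtain ⟨c, hc, htable⟩ := hW.exists_table hφ hψ (one_ne_zero : (1 : ι → ℂ) ≠ 0)
  let r : G → ℝ := fun γ => coeffRatio φ ψ (ρ γ *ᵥ 1)
  refine two_mul_ncard_wordBall_le hS (A := {γ | c ≤ E * r γ ∧ r γ ≤ E * c}) hw
    (pow_mem_wordBall ha L) (fun γ => ?_) (fun j hj γ hγ hjγ => ?_) n
  · have hne : ρ γ *ᵥ 1 ≠ 0 := fun h0 => one_ne_zero (α := ι → ℂ) <| by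
      rw [← one_mulVec (1 : ι → ℂ), ← map_one ρ, ← inv_mul_cancel γ, map_mul, ← mulVec_mulVec,
        h0, mulVec_zero]
    simpa only [Set.mem_ofPred_eq, r, map_mul, mulVec_mulVec] using htable _ hne
  · have hLj : L ≤ L * j := Nat.le_mul_of_pos_right L hj
    have hlt := lt_coeffRatio_pow_mulVec hφa hψa hμ hμ_le hE (hl _ hLj) hc hγ.1
    rw [← map_pow, mulVec_mulVec, ← map_mul, pow_mul] at hlt
    exact hlt.not_ge hjγ.2

end PingPong

section MatrixGrowth

universe u

variable (ι : Type*) [Fintype ι] [DecidableEq ι] [Nonempty ι]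

lemma exists_two_mul_ncard_wordBall_le : ∃ C > 0, ∀ {G : Type u} [Group G] {S : Set G}
    {ρ : G →* Matrix ι ι ℂ}, S.Finite → Subgroup.closure S = ⊤ →
    (∀ γ, ∃ z : ℤ, trace (ρ γ) = z) → (∀ γ, ‖(ρ γ).det‖ = 1) → (Set.range ρ).Infinite →
    EscapesTwoHyperplanes ℂ (Set.range ρ) →
    ∀ n, 2 * (wordBall S n).ncard ≤ (wordBall S (n + C)).ncard := by
  set N := Module.finrank ℂ (Matrix ι ι ℂ) with hN
  set n := Fintype.card ι with hn
  have hn_pos : 0 < n := Fintype.card_pos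
  obtain ⟨L, hL⟩ := exists_tableConst_sq_lt_pow N hn_pos
  let m := 4 * N ^ 2 + (N ^ 2 + (2 * (2 * n) + 1) ^ N ^ 2)
  have hN_pos : 0 < N := Module.finrank_pos
  refine ⟨N ^ 2 + 2 * N ^ 2 * (m * L), by positivity, ?_⟩
  intro G _ S ρ hS hgen htrace hdet hinf hesc j
  obtain ⟨d, hd, w, hw, hw_esc⟩ := hesc.exists_words hgen
  rw [← hN] at hd hw
  obtain ⟨γ, hγ, hγ_trace⟩ := exists_lt_norm_trace hS hgen htrace hinf hw hw_esc.span_eq_top (2 * n)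
  have hγm : γ ∈ wordBall S m := by
    refine wordBall_mono (le_add_left ?_) hγ
    rw [Fintype.card_fin]
    gcongr
    omega
  obtain ⟨_, ⟨a, ha, rfl⟩, φ, ψ, l, μ, hφ, hψ, hφa, hψa, hμ, hμ_le, htrace_le⟩ :=
    exists_dominant_eigenvectors ((finite_wordBall hS m).image ρ) ⟨_, γ, hγm, rfl⟩
      (Set.forall_mem_image.2 fun g _ => hdet g)
  rw [Set.forall_mem_image] at htrace_le
  have hl : 2 ≤ ‖l‖ := by
    have := hγ_trace.trans_le (htrace_le hγm)
    push_cast at this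
    rw [← hn, mul_comm] at this
    exact (lt_of_mul_lt_mul_left this (by positivity)).le
  have hB : 1 ≤ n * ‖l‖ := by
    have : (1 : ℝ) ≤ n := by exact_mod_cast hn_pos
    nlinarith
  have hW := integralFrame_of_mem_wordBall htrace hw hw_esc hB fun g hg =>
    htrace_le (wordBall_mono (Nat.le_add_right _ _) hg)
  refine (two_mul_ncard_wordBall_le_of_integralFrame hS hw hW ha hφ hψ hφa hψa hμ hμ_le
    (hL _ hl) j).trans (Set.ncard_le_ncard (wordBall_mono ?_) (finite_wordBall hS _))
  rw [Fintype.card_fin]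
  gcongr

theorem exists_one_lt_le_growthRate : ∃ δ > 1, ∀ {G : Type u} [Group G] {S : Set G}
    {ρ : G →* Matrix ι ι ℂ}, S.Finite → Subgroup.closure S = ⊤ →
    (∀ γ, ∃ z : ℤ, trace (ρ γ) = z) → (∀ γ, ‖(ρ γ).det‖ = 1) → (Set.range ρ).Infinite →
    EscapesTwoHyperplanes ℂ (Set.range ρ) → δ ≤ growthRate S := by
  obtain ⟨C, hC, hdouble⟩ := exists_two_mul_ncard_wordBall_le.{u} ι
  refine ⟨2 ^ (C : ℝ)⁻¹, Real.one_lt_rpow one_lt_two (by positivity), ?_⟩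
  intro G _ S ρ hS hgen htrace hdet hinf hesc
  exact two_rpow_inv_le_growthRate hS hgen hC (hdouble hS hgen htrace hdet hinf hesc)

end MatrixGrowth

section SquareZero

variable {K A : Type*} [Field K] [Ring A] [Algebra K A] {ν : A} {T : Set A}

lemma one_add_pow_of_mul_self_eq_zero {R : Type*} [Ring R] {ν : R} (hν : ν * ν = 0) (j : ℕ) :
    (1 + ν) ^ j = 1 + j • ν := by
  induction j with
  | zero => rw [pow_zero, zero_smul, add_zero]
  | succ j ih =>
    rw [pow_succ, ih, add_mul, one_mul, smul_mul_assoc, mul_add, mul_one, hν, add_zero,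
      succ_nsmul', add_assoc]

lemma span_closure_one_add_eq_top (hT : Algebra.adjoin K T = ⊤) :
    Submodule.span K (Submonoid.closure ((1 + ·) '' T) : Set A) = ⊤ := by
  rw [← Algebra.adjoin_eq_span, Algebra.toSubmodule_eq_top, ← top_le_iff, ← hT,
    Algebra.adjoin_le_iff]
  intro ν hν
  rw [SetLike.mem_coe, ← add_sub_cancel_left 1 ν]
  exact sub_mem (Algebra.subset_adjoin ⟨ν, hν, rfl⟩) (one_mem _)

lemma infinite_of_one_add_mem (K : Type*) {A : Type*} [Field K] [CharZero K] [Ring A]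
    [Algebra K A] {M : Submonoid A} {ν : A} (hν : ν * ν = 0) (hν_ne : ν ≠ 0) (hmem : 1 + ν ∈ M) :
    (M : Set A).Infinite := by
  refine Set.infinite_of_injective_forall_mem (f := fun j : ℕ => (1 + ν) ^ j) (fun i j hij => ?_)
    fun j => pow_mem hmem j
  simp only [one_add_pow_of_mul_self_eq_zero hν, add_right_inj, ← Nat.cast_smul_eq_nsmul K] at hij
  exact Nat.cast_injective (smul_left_injective K hν_ne hij)

variable [CharZero K]

lemma exists_nat_add_mul_ne_zero {a b c d : K} {i k : ℕ} (hi : a + i * b ≠ 0)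
    (hk : c + k * d ≠ 0) : ∃ j : ℕ, a + j * b ≠ 0 ∧ c + j * d ≠ 0 := by
  have finite_roots : ∀ {a b : K} {i : ℕ}, a + i * b ≠ 0 → {j : ℕ | a + j * b = 0}.Finite := by
    intro a b i hi
    refine Set.Subsingleton.finite fun j hj l hl => ?_
    rcases eq_or_ne b 0 with rfl | hb
    · simp_all
    · exact_mod_cast mul_right_cancel₀ hb (add_left_cancel (hj.trans hl.symm))
  obtain ⟨j, hj⟩ := ((finite_roots hi).union (finite_roots hk)).infinite_compl.nonempty
  exact ⟨j, not_or.1 hj⟩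

lemma exists_one_add_pow_mul_ne_zero (hν : ν * ν = 0) {φ ψ : Module.Dual K A} {x y : A} {i k : ℕ}
    (hi : φ ((1 + ν) ^ i * x) ≠ 0) (hk : ψ ((1 + ν) ^ k * y) ≠ 0) :
    ∃ j : ℕ, φ ((1 + ν) ^ j * x) ≠ 0 ∧ ψ ((1 + ν) ^ j * y) ≠ 0 := by
  have expand : ∀ (θ : Module.Dual K A) (z : A) (j : ℕ),
      θ ((1 + ν) ^ j * z) = θ z + j * θ (ν * z) := fun θ z j => by
    rw [one_add_pow_of_mul_self_eq_zero hν, add_mul, one_mul, smul_mul_assoc, map_add, map_nsmul,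
      nsmul_eq_mul]
  simp only [expand] at hi hk ⊢
  exact exists_nat_add_mul_ne_zero hi hk

lemma exists_ne_zero_of_mem_closure (hsq : ∀ ν ∈ T, ν * ν = 0) {x y : A}
    (hx : x ∈ Submonoid.closure ((1 + ·) '' T)) (hy : y ∈ Submonoid.closure ((1 + ·) '' T))
    {φ ψ : Module.Dual K A} (hφ : φ x ≠ 0) (hψ : ψ y ≠ 0) :
    ∃ z ∈ Submonoid.closure ((1 + ·) '' T), φ z ≠ 0 ∧ ψ z ≠ 0 := by
  induction hx using Submonoid.closure_induction_left generalizing φ ψ y with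
  | one =>
    induction hy using Submonoid.closure_induction_left generalizing φ ψ with
    | one => exact ⟨1, one_mem _, hφ, hψ⟩
    | mul_left g hg y _ ih =>
      have hg_mem := Submonoid.subset_closure hg
      obtain ⟨ν, hν, rfl⟩ := hg
      obtain ⟨j, hφj, hψj⟩ := exists_one_add_pow_mul_ne_zero (i := 0) (k := 1) (x := 1) (y := y)
        (hsq ν hν) (by rwa [pow_zero, one_mul]) (by rwa [pow_one])
      obtain ⟨z, hz, hφz, hψz⟩ := ih (φ := φ ∘ₗ LinearMap.mulLeft K ((1 + ν) ^ j))
        (ψ := ψ ∘ₗ LinearMap.mulLeft K ((1 + ν) ^ j)) hφj hψj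
      exact ⟨_, mul_mem (pow_mem hg_mem j) hz, hφz, hψz⟩
  | mul_left g hg x _ ih =>
    have hg_mem := Submonoid.subset_closure hg
    obtain ⟨ν, hν, rfl⟩ := hg
    obtain ⟨j, hφj, hψj⟩ := exists_one_add_pow_mul_ne_zero (i := 1) (k := 0) (x := x) (y := y)
      (hsq ν hν) (by rwa [pow_one]) (by rwa [pow_zero, one_mul])
    obtain ⟨z, hz, hφz, hψz⟩ := ih hy (φ := φ ∘ₗ LinearMap.mulLeft K ((1 + ν) ^ j))
      (ψ := ψ ∘ₗ LinearMap.mulLeft K ((1 + ν) ^ j)) hφj hψj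
    exact ⟨_, mul_mem (pow_mem hg_mem j) hz, hφz, hψz⟩

lemma escapesTwoHyperplanes_of_one_add_mem (hsq : ∀ ν ∈ T, ν * ν = 0)
    (hT : Algebra.adjoin K T = ⊤) {M : Submonoid A} (hM : ∀ ν ∈ T, 1 + ν ∈ M) :
    EscapesTwoHyperplanes K (M : Set A) := by
  have hle : Submonoid.closure ((1 + ·) '' T) ≤ M :=
    Submonoid.closure_le.2 (Set.image_subset_iff.2 hM)
  have exists_ne : ∀ θ : Module.Dual K A, θ ≠ 0 →
      ∃ x ∈ Submonoid.closure ((1 + ·) '' T), θ x ≠ 0 := fun θ hθ => by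
    by_contra! h
    exact hθ (LinearMap.ext_on (span_closure_one_add_eq_top hT) h)
  intro φ ψ hφ hψ
  obtain ⟨x, hx, hφx⟩ := exists_ne φ hφ
  obtain ⟨y, hy, hψy⟩ := exists_ne ψ hψ
  obtain ⟨z, hz, h⟩ := exists_ne_zero_of_mem_closure hsq hx hy hφx hψy
  exact ⟨z, hle hz, h⟩

end SquareZero

section Transvection

variable {ι R : Type*} [Fintype ι] [CommRing R] {J : Matrix ι ι R}

/-- The endomorphism `x ↦ ω(u, x) u` for the form `ω(u, x) = uᵀ J x`; the symplectic transvection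
along `u` is `1 + transvectionPart J u`. -/
def transvectionPart (J : Matrix ι ι R) (u : ι → R) : Matrix ι ι R :=
  vecMulVec u (u ᵥ* J)

lemma vecMul_dotProduct_self_eq_zero [NoZeroDivisors R] [CharZero R] (hJ : Jᵀ = -J) (u : ι → R) :
    u ᵥ* J ⬝ᵥ u = 0 := by
  refine self_eq_neg.1 ?_
  rw [← neg_dotProduct, ← vecMul_neg, ← hJ, vecMul_transpose, ← dotProduct_mulVec, dotProduct_comm]

lemma transvectionPart_mul (u v : ι → R) :
    transvectionPart J u * transvectionPart J v =
      (u ᵥ* J ⬝ᵥ v) • vecMulVec u (v ᵥ* J) := by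
  rw [transvectionPart, transvectionPart, vecMulVec_mul_vecMulVec, vecMulVec_smul]

lemma transvectionPart_mul_self (hJ : ∀ u, u ᵥ* J ⬝ᵥ u = 0) (u : ι → R) :
    transvectionPart J u * transvectionPart J u = 0 := by
  rw [transvectionPart_mul, hJ, zero_smul]

variable [DecidableEq ι]

lemma vecMul_vecMul_eq_neg (hJJ : J * J = -1) (u : ι → R) : u ᵥ* J ᵥ* J = -u := by
  rw [vecMul_vecMul, hJJ, vecMul_neg, vecMul_one]

lemma vecMul_ne_zero_of_mul_self_eq_neg_one (hJJ : J * J = -1) {u : ι → R} (hu : u ≠ 0) :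
    u ᵥ* J ≠ 0 := fun h =>
  hu (by rw [← neg_eq_zero, ← vecMul_vecMul_eq_neg hJJ, h, zero_vecMul])

lemma transvection_mul_mul_transpose (hJ : ∀ u, u ᵥ* J ⬝ᵥ u = 0) (hJT : Jᵀ = -J)
    (hJJ : J * J = -1) (u : ι → R) :
    (1 + transvectionPart J u) * J * (1 + transvectionPart J u)ᵀ = J := by
  have hleft : transvectionPart J u * J = -vecMulVec u u := by
    rw [transvectionPart, vecMulVec_mul, vecMul_vecMul_eq_neg hJJ, vecMulVec_neg]
  have hright : J * (transvectionPart J u)ᵀ = vecMulVec u u := by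
    rw [← neg_inj, ← neg_mul, ← hJT, ← transpose_mul, hleft, transpose_neg, transpose_vecMulVec]
  have hmid : transvectionPart J u * vecMulVec u u = 0 := by
    rw [transvectionPart, vecMulVec_mul_vecMulVec, hJ, zero_smul, vecMulVec_zero]
  rw [transpose_add, transpose_one, mul_add, mul_one, mul_assoc, hright, add_mul, one_mul, hleft,
    add_mul, one_mul, hmid]
  abel

variable {L : Subring (Matrix ι ι R)}

lemma vecMulVec_vecMul_mem (hJJ : J * J = -1)
    (hsat : ∀ r : R, r ≠ 0 → ∀ X, r • X ∈ L → X ∈ L) (hL : ∀ u, transvectionPart J u ∈ L)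
    (u v : ι → R) : vecMulVec u (v ᵥ* J) ∈ L := by
  have mem_of_ne : ∀ w, u ᵥ* J ⬝ᵥ w ≠ 0 → vecMulVec u (w ᵥ* J) ∈ L := fun w hw =>
    hsat _ hw _ (transvectionPart_mul u w ▸ mul_mem (hL u) (hL w))
  by_cases hv : u ᵥ* J ⬝ᵥ v = 0
  swap
  · exact mem_of_ne v hv
  rcases eq_or_ne u 0 with rfl | hu
  · rw [zero_vecMulVec]
    exact zero_mem L
  obtain ⟨w, hw⟩ : ∃ w, u ᵥ* J ⬝ᵥ w ≠ 0 := by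
    by_contra! h
    exact vecMul_ne_zero_of_mul_self_eq_neg_one hJJ hu (dotProduct_eq_zero _ h)
  have hsum := mem_of_ne (v + w) (by rwa [dotProduct_add, hv, zero_add])
  rw [add_vecMul, vecMulVec_add] at hsum
  exact (add_mem_cancel_right (mem_of_ne w hw)).1 hsum

lemma single_one_mem (hJJ : J * J = -1)
    (hsat : ∀ r : R, r ≠ 0 → ∀ X, r • X ∈ L → X ∈ L) (hL : ∀ u, transvectionPart J u ∈ L)
    (i j : ι) : single i j 1 ∈ L := by
  have h := vecMulVec_vecMul_mem hJJ hsat hL (Pi.single i 1) (-(Pi.single j 1 ᵥ* J))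
  rwa [neg_vecMul, vecMul_vecMul_eq_neg hJJ, neg_neg, ← single_eq_single_vecMulVec_single] at h

lemma adjoin_eq_top_of_smul_transvectionPart_mem {K : Type*} [Field K] [CharZero K]
    {J : Matrix ι ι ℤ} (hJJ : J * J = -1) {T : Set (Matrix ι ι K)}
    (hT : ∀ u, ∃ n : ℕ, n ≠ 0 ∧ n • (Int.castRingHom K).mapMatrix (transvectionPart J u) ∈ T) :
    Algebra.adjoin K T = ⊤ := by
  set 𝒜 := Algebra.adjoin K T
  set L := 𝒜.toSubring.comap (Int.castRingHom K).mapMatrix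
  have hsat : ∀ n : ℤ, n ≠ 0 → ∀ X, n • X ∈ L → X ∈ L := fun n hn X hX => by
    have h : (n : K) • (Int.castRingHom K).mapMatrix X ∈ 𝒜 := by
      rwa [Int.cast_smul_eq_zsmul, ← map_zsmul]
    exact (𝒜.toSubmodule.smul_mem_iff (Int.cast_ne_zero.2 hn)).1 h
  have hL : ∀ u, transvectionPart J u ∈ L := fun u => by
    obtain ⟨n, hn, hu⟩ := hT u
    refine hsat n (Nat.cast_ne_zero.2 hn) _ (Subring.mem_comap.2 ?_)
    rw [natCast_zsmul, map_nsmul]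
    exact Algebra.subset_adjoin hu
  refine Algebra.eq_top_iff.2 fun A => ?_
  rw [matrix_eq_sum_single A]
  refine sum_mem fun i _ => sum_mem fun j _ => ?_
  have h : (Int.castRingHom K).mapMatrix (single i j 1) ∈ 𝒜 := single_one_mem hJJ hsat hL i j
  have hA := 𝒜.smul_mem h (A i j)
  rwa [RingHom.mapMatrix_apply, map_single, map_one, smul_single, smul_eq_mul, mul_one] at hA

end Transvection

section StandardForm

variable {g : ℕ}

/-- The index paired with `i` by the standard symplectic form: `2k ↔ 2k + 1`. -/
def symplecticPartner (i : Fin (2 * g)) : Fin (2 * g) :=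
  if h : (i : ℕ) % 2 = 0 then ⟨i + 1, by omega⟩ else ⟨i - 1, by omega⟩

/-- The nonzero entry in row `i` of `stdSymplecticJ g`. -/
def symplecticSign (i : Fin (2 * g)) : ℤ := if (i : ℕ) % 2 = 0 then 1 else -1

lemma symplecticPartner_val (i : Fin (2 * g)) :
    (symplecticPartner i : ℕ) = if (i : ℕ) % 2 = 0 then (i : ℕ) + 1 else (i : ℕ) - 1 := by
  unfold symplecticPartner
  split_ifs <;> rfl

lemma symplecticPartner_symplecticPartner (i : Fin (2 * g)) :
    symplecticPartner (symplecticPartner i) = i := by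
  ext
  rw [symplecticPartner_val, symplecticPartner_val]
  split_ifs <;> omega

lemma symplecticSign_symplecticPartner (i : Fin (2 * g)) :
    symplecticSign (symplecticPartner i) = -symplecticSign i := by
  unfold symplecticSign
  rw [symplecticPartner_val]
  split_ifs <;> omega

lemma symplecticSign_mul_self (i : Fin (2 * g)) : symplecticSign i * symplecticSign i = 1 := by
  unfold symplecticSign
  split_ifs <;> rfl

lemma stdSymplecticJ_apply (i j : Fin (2 * g)) :
    stdSymplecticJ g i j = if j = symplecticPartner i then symplecticSign i else 0 := by
  unfold stdSymplecticJ symplecticSign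
  simp only [of_apply, Fin.ext_iff, symplecticPartner_val]
  split_ifs <;> omega

lemma stdSymplecticJ_transpose : (stdSymplecticJ g)ᵀ = -stdSymplecticJ g := by
  ext i j
  rw [transpose_apply, neg_apply, stdSymplecticJ_apply, stdSymplecticJ_apply]
  by_cases h : j = symplecticPartner i
  · rw [h, symplecticPartner_symplecticPartner, symplecticSign_symplecticPartner, if_pos rfl,
      if_pos rfl]
  · rw [if_neg h, if_neg (fun hi => h (by rw [hi, symplecticPartner_symplecticPartner])), neg_zero]

lemma stdSymplecticJ_mul_self : stdSymplecticJ g * stdSymplecticJ g = -1 := by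
  ext i j
  have hsum : (stdSymplecticJ g * stdSymplecticJ g) i j =
      symplecticSign i * stdSymplecticJ g (symplecticPartner i) j := by
    simp only [mul_apply, stdSymplecticJ_apply i, ite_mul, zero_mul, Finset.sum_ite_eq',
      Finset.mem_univ, if_true]
  rw [hsum, stdSymplecticJ_apply, symplecticPartner_symplecticPartner,
    symplecticSign_symplecticPartner, mul_ite, mul_neg, symplecticSign_mul_self, mul_zero,
    neg_apply, one_apply]
  simp only [eq_comm (a := j)]
  split_ifs <;> rfl

lemma vecMul_stdSymplecticJ_dotProduct_self (u : Fin (2 * g) → ℤ) :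
    u ᵥ* stdSymplecticJ g ⬝ᵥ u = 0 :=
  vecMul_dotProduct_self_eq_zero stdSymplecticJ_transpose u

/-- The symplectic transvection `x ↦ x + ω(u, x) u` as an element of `Sp(2g, ℤ)`. -/
def symplecticTransvection (u : Fin (2 * g) → ℤ) : Sp g where
  val :=
    { val := 1 + transvectionPart (stdSymplecticJ g) u
      inv := 1 - transvectionPart (stdSymplecticJ g) u
      val_inv := by
        rw [add_mul, one_mul, mul_sub, mul_one,
          transvectionPart_mul_self vecMul_stdSymplecticJ_dotProduct_self]
        abel
      inv_val := by
        rw [sub_mul, one_mul, mul_add, mul_one,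
          transvectionPart_mul_self vecMul_stdSymplecticJ_dotProduct_self]
        abel }
  property := transvection_mul_mul_transpose vecMul_stdSymplecticJ_dotProduct_self
    stdSymplecticJ_transpose stdSymplecticJ_mul_self u

/-- The representation of `Sp(2g, ℤ)` on `ℂ^{2g}`. -/
def spToComplexMatrix (g : ℕ) : Sp g →* Matrix (Fin (2 * g)) (Fin (2 * g)) ℂ :=
  (Int.castRingHom ℂ).mapMatrix.toMonoidHom.comp ((Units.coeHom _).comp (Sp g).subtype)

lemma exists_trace_spToComplexMatrix_eq (x : Sp g) :
    ∃ z : ℤ, trace (spToComplexMatrix g x) = z :=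
  ⟨_, (AddMonoidHom.map_trace (Int.castRingHom ℂ) _).symm⟩

lemma norm_det_spToComplexMatrix (x : Sp g) : ‖(spToComplexMatrix g x).det‖ = 1 := by
  have hdet : (spToComplexMatrix g x).det =
      ((x : GL (Fin (2 * g)) ℤ) : Matrix (Fin (2 * g)) (Fin (2 * g)) ℤ).det :=
    ((Int.castRingHom ℂ).map_det _).symm
  rw [hdet]
  rcases Int.isUnit_iff.1 ((isUnit_iff_isUnit_det _).1 (x : GL (Fin (2 * g)) ℤ).isUnit)
    with h | h <;> simp [h]

/-- The square-zero part of the transvection along the integral vector `u`, over `ℂ`. -/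
def complexTransvectionPart (u : Fin (2 * g) → ℤ) : Matrix (Fin (2 * g)) (Fin (2 * g)) ℂ :=
  (Int.castRingHom ℂ).mapMatrix (transvectionPart (stdSymplecticJ g) u)

lemma complexTransvectionPart_mul_self (u : Fin (2 * g) → ℤ) :
    complexTransvectionPart u * complexTransvectionPart u = 0 := by
  rw [complexTransvectionPart, ← map_mul,
    transvectionPart_mul_self vecMul_stdSymplecticJ_dotProduct_self, map_zero]

lemma complexTransvectionPart_ne_zero {u : Fin (2 * g) → ℤ} (hu : u ≠ 0) :
    complexTransvectionPart u ≠ 0 :=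
  (map_ne_zero_iff (Int.castRingHom ℂ).mapMatrix (map_injective Int.cast_injective)).2
    (vecMulVec_ne_zero hu (vecMul_ne_zero_of_mul_self_eq_neg_one stdSymplecticJ_mul_self hu))

lemma spToComplexMatrix_symplecticTransvection (u : Fin (2 * g) → ℤ) :
    spToComplexMatrix g (symplecticTransvection u) = 1 + complexTransvectionPart u := by
  rw [complexTransvectionPart, ← map_one (Int.castRingHom ℂ).mapMatrix, ← map_add]
  rfl

variable (H : Subgroup (Sp g)) [H.FiniteIndex]

lemma exists_one_add_nsmul_complexTransvectionPart_mem (u : Fin (2 * g) → ℤ) :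
    ∃ n : ℕ, n ≠ 0 ∧ 1 + n • complexTransvectionPart u ∈
      H.toSubmonoid.map (spToComplexMatrix g) := by
  obtain ⟨n, hn, -, hmem⟩ := H.exists_pow_mem_of_index_ne_zero Subgroup.FiniteIndex.index_ne_zero
    (symplecticTransvection u)
  refine ⟨n, hn.ne', _, hmem, ?_⟩
  rw [map_pow, spToComplexMatrix_symplecticTransvection,
    one_add_pow_of_mul_self_eq_zero (complexTransvectionPart_mul_self u)]

lemma nsmul_complexTransvectionPart_mul_self (n : ℕ) (u : Fin (2 * g) → ℤ) :
    n • complexTransvectionPart u * n • complexTransvectionPart u = 0 := by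
  rw [smul_mul_smul_comm, complexTransvectionPart_mul_self, smul_zero]

lemma infinite_image_spToComplexMatrix (hg : 1 ≤ g) :
    (spToComplexMatrix g '' H).Infinite := by
  have : Nonempty (Fin (2 * g)) := ⟨⟨0, by omega⟩⟩
  obtain ⟨u, hu⟩ := exists_ne (0 : Fin (2 * g) → ℤ)
  obtain ⟨n, hn, hmem⟩ := exists_one_add_nsmul_complexTransvectionPart_mem H u
  have hne : n • complexTransvectionPart u ≠ 0 := by
    rw [← Nat.cast_smul_eq_nsmul ℂ]
    exact smul_ne_zero (Nat.cast_ne_zero.2 hn) (complexTransvectionPart_ne_zero hu)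
  exact infinite_of_one_add_mem ℂ (nsmul_complexTransvectionPart_mul_self n u)
    hne hmem

lemma escapesTwoHyperplanes_image_spToComplexMatrix :
    EscapesTwoHyperplanes ℂ (spToComplexMatrix g '' H) := by
  let T := {ν | ν * ν = 0 ∧ 1 + ν ∈ H.toSubmonoid.map (spToComplexMatrix g)}
  have hT : Algebra.adjoin ℂ T = ⊤ :=
    adjoin_eq_top_of_smul_transvectionPart_mem stdSymplecticJ_mul_self fun u =>
      let ⟨n, hn, hmem⟩ := exists_one_add_nsmul_complexTransvectionPart_mem H u
      ⟨n, hn, nsmul_complexTransvectionPart_mul_self n u, hmem⟩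
  exact escapesTwoHyperplanes_of_one_add_mem (fun ν hν => hν.1) hT fun ν hν => hν.2

end StandardForm

theorem uniform_growth_of_surjection_onto_sp_general {G : Type*} [Group G] (hG : Group.FG G)
    (g : ℕ) (hg : 1 ≤ g) (ρ : G →* Sp g) (hρ : ρ.range.FiniteIndex) : 1 < minGrowth G := by
  have : Nonempty (Fin (2 * g)) := ⟨⟨0, by omega⟩⟩
  let ρℂ := (spToComplexMatrix g).comp ρ
  have hrange : Set.range ρℂ = spToComplexMatrix g '' ρ.range := by
    rw [MonoidHom.coe_comp, Set.range_comp, MonoidHom.coe_range]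
  obtain ⟨δ, hδ, hgrowth⟩ := exists_one_lt_le_growthRate (Fin (2 * g))
  obtain ⟨S₀, hS₀⟩ := Group.fg_def.1 hG
  refine hδ.trans_le (le_csInf ⟨_, S₀, hS₀, rfl⟩ ?_)
  rintro _ ⟨S, hS, rfl⟩
  exact hgrowth (ρ := ρℂ) S.finite_toSet hS
    (fun γ => exists_trace_spToComplexMatrix_eq (ρ γ))
    (fun γ => norm_det_spToComplexMatrix (ρ γ))
    (hrange ▸ infinite_image_spToComplexMatrix ρ.range hg)
    (hrange ▸ escapesTwoHyperplanes_image_spToComplexMatrix ρ.range)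

/-- a finitely generated group surjecting onto `Sp(2g,ℤ)`, `g ≥ 1`, has
uniformly exponential growth. -/
theorem uniform_growth_of_surjection_onto_sp {G : Type*} [Group G]
    (hG : Group.FG G) (g : ℕ) (hg : 1 ≤ g)
    (ρ : G →* Sp g) (hρ : Function.Surjective ρ) :
    1 < minGrowth G :=
  uniform_growth_of_surjection_onto_sp_general hG g hg ρ
    (ρ.range_eq_top.2 hρ ▸ inferInstance)
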